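/- Let X be an infinite set of real numbers and let 𝒰 be a countable large cover of X, enumerated bijectively as ⟨Uₙ : n ∈ ℕ⟩, with associated map h_𝒰 : X → P(ℕ) given by h_𝒰(x) = {n : x ∈ Uₙ}. Then: (1) 𝒰 is an ω-cover of X if and only if h_𝒰[X] is centered; (2) 𝒰 contains a γ-cover of X (as a subfamily) if and only if h_𝒰[X] has a pseudo-intersection; (3) 𝒰 is a τ-cover of X if and only if h_𝒰[X] is linearly quasiordered by ⊆*. -/

import Mathlib

open Set

namespace TauCoverPaper

/-- `a ⊆* b`: `a \ b` is finite. -/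
def AlmostSubset (a b : Set ℕ) : Prop := (a \ b).Finite

/-- `Y` is linearly quasiordered by `⊆*`. -/
def LinQuasi (Y : Set (Set ℕ)) : Prop :=
  ∀ a ∈ Y, ∀ b ∈ Y, AlmostSubset a b ∨ AlmostSubset b a

/-- `a` is a pseudo-intersection of the family `Y`. -/
def PseudoIntersection (a : Set ℕ) (Y : Set (Set ℕ)) : Prop :=
  a.Infinite ∧ ∀ b ∈ Y, AlmostSubset a b

/-- `Y` is centered: every nonempty finite subfamily has infinite intersection. -/
def Centered (Y : Set (Set ℕ)) : Prop :=
  ∀ F : Set (Set ℕ), F ⊆ Y → F.Finite → F.Nonempty → (⋂₀ F).Infinite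

/-- A tower: a family of infinite subsets of `ℕ`, linearly quasiordered by `⊆*`,
with no pseudo-intersection. -/
def IsTower (Y : Set (Set ℕ)) : Prop :=
  (∀ a ∈ Y, a.Infinite) ∧ LinQuasi Y ∧ ¬ ∃ a, PseudoIntersection a Y

variable {α : Type}

/-- A cover of the space `α`: the union is everything, and the whole space is
not a member. -/
def IsCover (𝒰 : Set (Set α)) : Prop := ⋃₀ 𝒰 = univ ∧ univ ∉ 𝒰

/-- A large cover: each point belongs to infinitely many members. -/
def IsLargeCover (𝒰 : Set (Set α)) : Prop :=
  IsCover 𝒰 ∧ ∀ x : α, {U ∈ 𝒰 | x ∈ U}.Infinite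

/-- An ω-cover: each finite set is contained in some member. -/
def IsOmegaCover (𝒰 : Set (Set α)) : Prop :=
  IsCover 𝒰 ∧ ∀ F : Set α, F.Finite → ∃ U ∈ 𝒰, F ⊆ U

/-- A γ-cover: infinite, and each point belongs to all but finitely many members. -/
def IsGammaCover (𝒰 : Set (Set α)) : Prop :=
  IsCover 𝒰 ∧ 𝒰.Infinite ∧ ∀ x : α, {U ∈ 𝒰 | x ∉ U}.Finite

/-- A τ-cover: a large cover such that for all `x, y`, one of the sets
`{U : x ∈ U, y ∉ U}`, `{U : y ∈ U, x ∉ U}` is finite. -/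
def IsTauCover (𝒰 : Set (Set α)) : Prop :=
  IsLargeCover 𝒰 ∧ ∀ x y : α,
    {U ∈ 𝒰 | x ∈ U ∧ y ∉ U}.Finite ∨ {U ∈ 𝒰 | y ∈ U ∧ x ∉ U}.Finite

/-- A τ*-cover: a large, countably infinite cover which, enumerated bijectively
as `⟨Uₙ⟩`, admits for each point `y` an infinite `r y ⊆ {n | y ∈ Uₙ}` such that
the family `{r y}` is linearly quasiordered by `⊆*`. -/
def IsTauStarCover (𝒰 : Set (Set α)) : Prop :=
  IsLargeCover 𝒰 ∧
  ∃ U : ℕ → Set α, Function.Injective U ∧ Set.range U = 𝒰 ∧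
    ∃ r : α → Set ℕ,
      (∀ y : α, (r y).Infinite ∧ r y ⊆ {n | y ∈ U n}) ∧
      (∀ y z : α, AlmostSubset (r y) (r z) ∨ AlmostSubset (r z) (r y))

/-- Ω : countable open ω-covers. -/
def OpenOmega (α : Type) [TopologicalSpace α] : Set (Set (Set α)) :=
  {𝒰 | 𝒰.Countable ∧ (∀ U ∈ 𝒰, IsOpen U) ∧ IsOmegaCover 𝒰}

/-- Γ : countable open γ-covers. -/
def OpenGamma (α : Type) [TopologicalSpace α] : Set (Set (Set α)) :=
  {𝒰 | 𝒰.Countable ∧ (∀ U ∈ 𝒰, IsOpen U) ∧ IsGammaCover 𝒰}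

/-- T : countable open τ-covers. -/
def OpenTau (α : Type) [TopologicalSpace α] : Set (Set (Set α)) :=
  {𝒰 | 𝒰.Countable ∧ (∀ U ∈ 𝒰, IsOpen U) ∧ IsTauCover 𝒰}

/-- T* : countable open τ*-covers. -/
def OpenTauStar (α : Type) [TopologicalSpace α] : Set (Set (Set α)) :=
  {𝒰 | 𝒰.Countable ∧ (∀ U ∈ 𝒰, IsOpen U) ∧ IsTauStarCover 𝒰}

/-- B_Ω : countable Borel ω-covers. -/
def BorelOmega (α : Type) [MeasurableSpace α] : Set (Set (Set α)) :=
  {𝒰 | 𝒰.Countable ∧ (∀ U ∈ 𝒰, MeasurableSet U) ∧ IsOmegaCover 𝒰}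

/-- B_Γ : countable Borel γ-covers. -/
def BorelGamma (α : Type) [MeasurableSpace α] : Set (Set (Set α)) :=
  {𝒰 | 𝒰.Countable ∧ (∀ U ∈ 𝒰, MeasurableSet U) ∧ IsGammaCover 𝒰}

/-- B_T : countable Borel τ-covers. -/
def BorelTau (α : Type) [MeasurableSpace α] : Set (Set (Set α)) :=
  {𝒰 | 𝒰.Countable ∧ (∀ U ∈ 𝒰, MeasurableSet U) ∧ IsTauCover 𝒰}

/-- The selection principle S₁(𝔘,𝔙). -/
def S1 (𝔘 𝔙 : Set (Set (Set α))) : Prop :=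
  ∀ 𝒰 : ℕ → Set (Set α), (∀ n, 𝒰 n ∈ 𝔘) →
    ∃ V : ℕ → Set α, (∀ n, V n ∈ 𝒰 n) ∧ Set.range V ∈ 𝔙

/-- The selection principle Sfin(𝔘,𝔙). -/
def Sfin (𝔘 𝔙 : Set (Set (Set α))) : Prop :=
  ∀ 𝒰 : ℕ → Set (Set α), (∀ n, 𝒰 n ∈ 𝔘) →
    ∃ F : ℕ → Set (Set α), (∀ n, (F n).Finite ∧ F n ⊆ 𝒰 n) ∧ (⋃ n, F n) ∈ 𝔙

/-- The selection principle Ufin(𝔘,𝔙). -/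
def Ufin (𝔘 𝔙 : Set (Set (Set α))) : Prop :=
  ∀ 𝒰 : ℕ → Set (Set α), (∀ n, 𝒰 n ∈ 𝔘) →
    (∀ n, ¬ ∃ F : Set (Set α), F ⊆ 𝒰 n ∧ F.Finite ∧ ⋃₀ F = univ) →
    ∃ F : ℕ → Set (Set α), (∀ n, (F n).Finite ∧ F n ⊆ 𝒰 n) ∧
      Set.range (fun n => ⋃₀ (F n)) ∈ 𝔙

/-- binom(𝔘,𝔙): each member of 𝔘 contains a subfamily belonging to 𝔙. -/
def Binom (𝔘 𝔙 : Set (Set (Set α))) : Prop :=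
  ∀ 𝒰 ∈ 𝔘, ∃ 𝒱 ⊆ 𝒰, 𝒱 ∈ 𝔙

/-- Borel measurability of a map into `P(ℕ)` (identified with the Cantor
space via characteristic functions): each coordinate is measurable. -/
def BorelMeasSets {β : Type} [MeasurableSpace β] (f : β → Set ℕ) : Prop :=
  ∀ n : ℕ, MeasurableSet {x | n ∈ f x}

/-- The excluded middle property for a family `Y ⊆ ℕ^ℕ`. -/
def ExcludedMiddleProp (Y : Set (ℕ → ℕ)) : Prop :=
  ∃ g : ℕ → ℕ,
    (∀ f ∈ Y, {n | f n < g n}.Infinite) ∧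
    ∀ f ∈ Y, ∀ h ∈ Y,
      {n | f n < g n ∧ g n ≤ h n}.Finite ∨ {n | h n < g n ∧ g n ≤ f n}.Finite

/-- non(J): the minimal cardinality of a set of reals not satisfying `J`. -/
noncomputable def nonCard (J : Set ℝ → Prop) : Cardinal :=
  sInf {c : Cardinal | ∃ X : Set ℝ, ¬ J X ∧ Cardinal.mk ↥X = c}

/-- add(J): the minimal cardinality of a family of sets of reals, each
satisfying `J`, whose union does not satisfy `J`. -/
noncomputable def addCard (J : Set ℝ → Prop) : Cardinal :=
  sInf {c : Cardinal | ∃ 𝔉 : Set (Set ℝ),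
    (∀ A ∈ 𝔉, J A) ∧ ¬ J (⋃₀ 𝔉) ∧ Cardinal.mk ↥𝔉 = c}

/-- 𝔱 : the minimal cardinality of a tower. -/
noncomputable def towerCard : Cardinal :=
  sInf {c : Cardinal | ∃ Y : Set (Set ℕ), IsTower Y ∧ Cardinal.mk ↥Y = c}

/-! Along an injective enumeration, a property of members holds for finitely many members iff it
holds for finitely many indices, so the γ- and τ-cover conditions translate directly. Centeredness,
however, asks for infinitely many members containing a finite set `F`, while an ω-cover provides
one: if only finitely many contained `F`, adding to `F` a point missed by each of them would give
a finite set contained in no member. -/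

section General

variable {ι β : Type*} {f : ι → β}

theorem finite_sep_range_iff (hf : Function.Injective f) (P : β → Prop) :
    {b ∈ range f | P b}.Finite ↔ {i | P (f i)}.Finite := by
  have image_eq : f '' {i | P (f i)} = {b ∈ range f | P b} := image_preimage_eq_range_inter
  rw [← image_eq, finite_image_iff hf.injOn]

variable {h : ι → Set ℕ}

theorem centered_range_iff :
    Centered (range h) ↔
      ∀ F : Set ι, F.Finite → F.Nonempty → (⋂ x ∈ F, h x).Infinite := by
  constructor
  · intro hcent F hF hne
    rw [← sInter_image]
    exact hcent (h '' F) (image_subset_range h F) (hF.image h) (hne.image h)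
  · intro hinter 𝒴 h𝒴 hfin hne
    obtain ⟨F, -, hF, rfl⟩ :=
      hfin.exists_subset_finite_image_eq (h𝒴.trans image_univ.superset)
    rw [sInter_image]
    exact hinter F hF hne.of_image

theorem pseudoIntersection_range_iff {a : Set ℕ} :
    PseudoIntersection a (range h) ↔ a.Infinite ∧ ∀ x, AlmostSubset a (h x) :=
  and_congr_right' forall_mem_range

theorem linQuasi_range_iff :
    LinQuasi (range h) ↔ ∀ x y, AlmostSubset (h x) (h y) ∨ AlmostSubset (h y) (h x) := by
  simp only [LinQuasi, forall_mem_range]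

end General

section Covers

variable {𝒰 : Set (Set α)}

theorem exists_finite_forall_not_subset (hfin : 𝒰.Finite) (huniv : univ ∉ 𝒰) :
    ∃ G : Set α, G.Finite ∧ ∀ V ∈ 𝒰, ¬ G ⊆ V := by
  have exists_notMem (V : 𝒰) : ∃ x, x ∉ V.1 :=
    (ne_univ_iff_exists_notMem V.1).1 (ne_of_mem_of_not_mem V.2 huniv)
  choose p hp using exists_notMem
  have := hfin.to_subtype
  exact ⟨range p, finite_range p, fun V hV hsub => hp ⟨V, hV⟩ (hsub (mem_range_self _))⟩

theorem IsOmegaCover.infinite_sep_subset (h𝒰 : IsOmegaCover 𝒰) {F : Set α} (hF : F.Finite) :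
    {V ∈ 𝒰 | F ⊆ V}.Infinite := by
  intro hfin
  obtain ⟨G, hG, hGV⟩ := exists_finite_forall_not_subset hfin fun huniv => h𝒰.1.2 huniv.1
  obtain ⟨V, hV, hFG⟩ := h𝒰.2 (F ∪ G) (hF.union hG)
  obtain ⟨hFV, hGV'⟩ := union_subset_iff.1 hFG
  exact hGV V ⟨hV, hFV⟩ hGV'

theorem isGammaCover_iff :
    IsGammaCover 𝒰 ↔ univ ∉ 𝒰 ∧ 𝒰.Infinite ∧ ∀ x : α, {V ∈ 𝒰 | x ∉ V}.Finite := by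
  refine ⟨fun h => ⟨h.1.2, h.2⟩, fun ⟨huniv, hinf, hfin⟩ => ⟨⟨?_, huniv⟩, hinf, hfin⟩⟩
  refine sUnion_eq_univ_iff.2 fun x => ?_
  obtain ⟨V, hV, hxV⟩ := hinf.exists_notMem_finite (hfin x)
  exact ⟨V, hV, not_not.1 fun hx => hxV ⟨hV, hx⟩⟩

end Covers

/-- The value at `x` of the map `h_𝒰 : X → P(ℕ)` associated with the enumerated family
`𝒰 = ⟨Uₙ : n ∈ ℕ⟩`: the set of indices of the members containing `x`. -/
def indexSet (U : ℕ → Set α) (x : α) : Set ℕ := {n | x ∈ U n}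

section Enumerated

variable {U : ℕ → Set α}

theorem biInter_indexSet (U : ℕ → Set α) (F : Set α) :
    ⋂ x ∈ F, indexSet U x = {n | F ⊆ U n} := by
  ext n
  simp only [indexSet, mem_iInter, mem_ofPred_eq, subset_def]

theorem almostSubset_indexSet_iff (hinj : Function.Injective U) (x y : α) :
    AlmostSubset (indexSet U x) (indexSet U y) ↔ {V ∈ range U | x ∈ V ∧ y ∉ V}.Finite :=
  (finite_sep_range_iff hinj fun V => x ∈ V ∧ y ∉ V).symm

theorem isOmegaCover_range_iff (hcover : IsCover (range U)) :
    IsOmegaCover (range U) ↔ Centered (range (indexSet U)) := by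
  simp only [centered_range_iff, biInter_indexSet]
  constructor
  · intro hω F hF _
    exact ((hω.infinite_sep_subset hF).preimage (sep_subset _ _)).mono fun n hn => hn.2
  · refine fun hcent => ⟨hcover, fun F hF => ?_⟩
    rcases F.eq_empty_or_nonempty with rfl | hne
    · exact ⟨U 0, mem_range_self 0, empty_subset _⟩
    · obtain ⟨n, hn⟩ := (hcent F hF hne).nonempty
      exact ⟨U n, mem_range_self n, hn⟩

theorem IsGammaCover.pseudoIntersection_preimage {𝒱 : Set (Set α)} (h𝒱 : IsGammaCover 𝒱)
    (hinj : Function.Injective U) (hsub : 𝒱 ⊆ range U) :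
    PseudoIntersection (U ⁻¹' 𝒱) (range (indexSet U)) :=
  pseudoIntersection_range_iff.2
    ⟨h𝒱.2.1.preimage hsub, fun x => (h𝒱.2.2 x).preimage (f := U) hinj.injOn⟩

theorem PseudoIntersection.isGammaCover_image {a : Set ℕ}
    (ha : PseudoIntersection a (range (indexSet U))) (hinj : Function.Injective U)
    (huniv : univ ∉ range U) : IsGammaCover (U '' a) := by
  obtain ⟨hinf, hsub⟩ := pseudoIntersection_range_iff.1 ha
  refine isGammaCover_iff.2
    ⟨fun h => huniv (image_subset_range U a h), hinf.image hinj.injOn, fun x => ?_⟩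
  refine ((hsub x).image U).subset ?_
  rintro _ ⟨⟨n, hn, rfl⟩, hx⟩
  exact mem_image_of_mem U ⟨hn, hx⟩

theorem exists_isGammaCover_subset_range_iff (hinj : Function.Injective U)
    (huniv : univ ∉ range U) :
    (∃ 𝒱 ⊆ range U, IsGammaCover 𝒱) ↔ ∃ a, PseudoIntersection a (range (indexSet U)) :=
  ⟨fun ⟨_, hsub, h𝒱⟩ => ⟨_, h𝒱.pseudoIntersection_preimage hinj hsub⟩,
    fun ⟨a, ha⟩ => ⟨U '' a, image_subset_range U a, ha.isGammaCover_image hinj huniv⟩⟩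

theorem isTauCover_range_iff (hinj : Function.Injective U) (hlarge : IsLargeCover (range U)) :
    IsTauCover (range U) ↔ LinQuasi (range (indexSet U)) := by
  simp only [linQuasi_range_iff, almostSubset_indexSet_iff hinj, IsTauCover, hlarge, true_and]

end Enumerated

theorem statement7_general (U : ℕ → Set α) (hinj : Function.Injective U)
    (hlarge : IsLargeCover (range U)) :
    (IsOmegaCover (range U) ↔ Centered (range (indexSet U))) ∧
    ((∃ 𝒱 ⊆ range U, IsGammaCover 𝒱) ↔
      ∃ a : Set ℕ, PseudoIntersection a (range (indexSet U))) ∧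
    (IsTauCover (range U) ↔ LinQuasi (range (indexSet U))) :=
  ⟨isOmegaCover_range_iff hlarge.1,
    exists_isGammaCover_subset_range_iff hinj hlarge.1.2,
    isTauCover_range_iff hinj hlarge⟩

/-- For a countable large cover `𝒰 = {Uₙ}` of `X` (enumerated bijectively)
with `h_𝒰(x) = {n : x ∈ Uₙ}`:
(1) `𝒰` is an ω-cover iff `h_𝒰[X]` is centered;
(2) `𝒰` contains a γ-cover iff `h_𝒰[X]` has a pseudo-intersection;
(3) `𝒰` is a τ-cover iff `h_𝒰[X]` is linearly quasiordered by `⊆*`. -/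
theorem statement7 (X : Set ℝ) (hX : X.Infinite) (U : ℕ → Set ↥X)
    (hinj : Function.Injective U) (hlarge : IsLargeCover (Set.range U)) :
    (IsOmegaCover (Set.range U) ↔
      Centered (Set.range fun x : ↥X => {n | x ∈ U n})) ∧
    ((∃ 𝒱 ⊆ Set.range U, IsGammaCover 𝒱) ↔
      ∃ a : Set ℕ, PseudoIntersection a (Set.range fun x : ↥X => {n | x ∈ U n})) ∧
    (IsTauCover (Set.range U) ↔
      LinQuasi (Set.range fun x : ↥X => {n | x ∈ U n})) :=
  statement7_general U hinj hlarge

end TauCoverPaper
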